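/- arXiv:1808.06247 — 2 statements merged into one kernel-verified Lean document; each statement's English description precedes it below -/
import Mathlib

section
/- Every path hypergraph with exactly three edges, all of size at least 3, is (Z₂×Z₂)-cordial. -/
/-!
Write `e1 = {x, a} ∪ A`, `e2 = {x, y, b} ∪ B` and `e3 = {y} ∪ C`, where `x` and `y` are the two
shared vertices, `a` and `b` are further vertices of `e1` and `e2`, and `A`, `B`, `C` collect the
remaining ones.  List all vertices in some order and label them periodically by
`(0,1), (1,0), (1,1), (0,0), (0,1), …`.  Every such labeling is friendly (`friendly_cyclicLabel`).
Since the four labels of a period add up to `0`, the sum over a block of consecutive positions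
depends only on the two ends of the block modulo 4 (`sum_block`), so the three edge labels depend
only on `|A|`, `|B|`, `|C|` modulo 4.

The two orders `y, x, A, B, a, b, C` and `y, x, A, b, B, a, C` suffice: for each of the
64 residue triples, at least one of them makes the three edge labels pairwise distinct
(`sums_distinct`), and then no edge label occurs twice.
-/

open Finset

open Finset

/-- The Klein four-group `Z₂ × Z₂`. -/
abbrev K4 : Type := ZMod 2 × ZMod 2

/-- The edge label induced by a vertex labeling: the sum of the labels of the
vertices of the edge. -/
def edgeSum {V : Type*} (c : V → K4) (e : Finset V) : K4 :=
  ∑ v ∈ e, c v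

/-- A labeling `c` of the vertex set `Vs` is `Z₂×Z₂`-friendly if any two label
classes differ in size by at most one. -/
def Friendly {V : Type*} [DecidableEq V] (Vs : Finset V) (c : V → K4) : Prop :=
  ∀ a b : K4,
    |((Vs.filter fun v => c v = a).card : ℤ) -
      ((Vs.filter fun v => c v = b).card : ℤ)| ≤ 1

/-- A hypergraph with vertex set `Vs` and edge set `E` is `Z₂×Z₂`-cordial if it
admits a `Z₂×Z₂`-friendly vertex labeling whose induced edge label classes
differ in size by at most one. -/
def Cordial {V : Type*} [DecidableEq V] (Vs : Finset V) (E : Finset (Finset V)) : Prop :=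
  ∃ c : V → K4, Friendly Vs c ∧
    ∀ a b : K4,
      |((E.filter fun e => edgeSum c e = a).card : ℤ) -
        ((E.filter fun e => edgeSum c e = b).card : ℤ)| ≤ 1

/-- The sum of the first `k` terms of the periodic sequence
`(0,1), (1,0), (1,1), (0,0), (0,1), …`, as a function of `k` modulo 4. -/
def partialSum (k : ZMod 4) : K4 :=
  if k = 1 then (0, 1) else if k = 2 then (1, 1) else (0, 0)

/-- The periodic sequence `(0,1), (1,0), (1,1), (0,0), (0,1), …`, with index read modulo 4, as the
difference sequence of its prefix sums. -/
def seqLabel (k : ZMod 4) : K4 := partialSum (k + 1) - partialSum k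

/-- The labeling that runs periodically along the list `L`. -/
def cyclicLabel {V : Type*} [DecidableEq V] (L : List V) (v : V) : K4 :=
  seqLabel (L.idxOf v : ℕ)

/-- The sum of the labels at the positions `s, …, t - 1`, in terms of `s` and `t` modulo 4. -/
def blockSum (s t : ZMod 4) : K4 := partialSum t - partialSum s

lemma map_cyclicLabel {V : Type*} [DecidableEq V] {L : List V} (hL : L.Nodup) :
    L.map (cyclicLabel L) = (List.range L.length).map fun i => seqLabel (i : ℕ) := by
  apply List.ext_getElem (by simp)
  intro i h1 h2
  simp [cyclicLabel, hL.idxOf_getElem]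

lemma sum_block {V : Type*} [DecidableEq V] {L : List V} (hL : L.Nodup) (l₁ l l₂ : List V)
    (h : L = l₁ ++ (l ++ l₂)) :
    (l.map (cyclicLabel L)).sum = blockSum l₁.length (l₁.length + l.length) := by
  induction l generalizing l₁ with
  | nil => simp [blockSum]
  | cons v l ih =>
    have hv : L.idxOf v = l₁.length := by
      have hn : v ∉ l₁ := by
        intro hv
        rw [h, List.nodup_append] at hL
        exact hL.2.2 v hv v (by simp) rfl
      subst h
      rw [List.idxOf_append_of_notMem hn]
      simp
    have := ih (l₁ ++ [v]) (by simp [h])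
    rw [List.map_cons, List.sum_cons, this, cyclicLabel, hv]
    simp only [seqLabel, blockSum, List.length_append, List.length_cons, List.length_nil]
    push_cast
    rw [show (l₁.length : ZMod 4) + 1 + l.length = l₁.length + (l.length + 1) by ring]
    abel

/-- Each label occurs in the periodic sequence exactly along one residue class modulo 4. -/
lemma exists_residue (a : K4) : ∃ r : Fin 4, ∀ k : ZMod 4, seqLabel k = a ↔ k = (r : ℕ) := by
  revert a; decide

lemma friendly_cyclicLabel {V : Type*} [DecidableEq V] (L : List V) (hL : L.Nodup) :
    Friendly L.toFinset (cyclicLabel L) := by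
  have key : ∀ a : K4, ∃ r : ℕ, ((L.toFinset.filter fun v => cyclicLabel L v = a).card : ℕ) =
      L.length / 4 + if r % 4 < L.length % 4 then 1 else 0 := by
    intro a
    obtain ⟨r, hr⟩ := exists_residue a
    refine ⟨r, ?_⟩
    rw [← Nat.count_modEq_card _ (by norm_num)]
    have h1 : (L.toFinset.filter fun v => cyclicLabel L v = a).card
        = (L.map (cyclicLabel L)).count a := by
      rw [List.count, List.countP_map, List.countP_eq_length_filter,
        ← List.toFinset_card_of_nodup (hL.filter _), List.toFinset_filter]
      simp
    rw [h1, map_cyclicLabel hL, List.count, List.countP_map, Nat.count]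
    apply List.countP_congr
    intro i _
    simp [hr, ← ZMod.natCast_eq_natCast_iff]
  intro a b
  obtain ⟨r, hr⟩ := key a
  obtain ⟨s, hs⟩ := key b
  rw [hr, hs]
  push_cast
  split_ifs <;> simp

lemma cordial_of_distinct {V : Type*} [DecidableEq V] (Vs e1 e2 e3 : Finset V) (c : V → K4)
    (hc : Friendly Vs c)
    (h : edgeSum c e1 ≠ edgeSum c e2 ∧ edgeSum c e1 ≠ edgeSum c e3 ∧
      edgeSum c e2 ≠ edgeSum c e3) :
    Cordial Vs ({e1, e2, e3} : Finset (Finset V)) := by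
  refine ⟨c, hc, ?_⟩
  have key : ∀ a : K4,
      ((({e1, e2, e3} : Finset (Finset V)).filter fun e => edgeSum c e = a).card) ≤ 1 := by
    intro a
    rw [Finset.card_le_one]
    intro e he f hf
    simp only [mem_filter, mem_insert, mem_singleton] at he hf
    grind
  intro a b
  have ha := key a
  have hb := key b
  rw [abs_le]
  constructor <;> omega

/-- Here `α`, `β`, `γ` stand for the sizes of `A`, `B`, `C` modulo 4.  The first alternative is the
distinctness of the labels of `e1`, `e2`, `e3` for the order `y, x, A, B, a, b, C`, the second one
for the order `y, x, A, b, B, a, C`. -/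
lemma sums_distinct (α β γ : ZMod 4) :
    (let s1 := seqLabel 1 + (seqLabel (2 + α + β) + blockSum 2 (2 + α))
     let s2 := seqLabel 1 + (seqLabel 0 +
       (seqLabel (2 + α + β + 1) + blockSum (2 + α) (2 + α + β)))
     let s3 := seqLabel 0 + blockSum (2 + α + β + 2) (2 + α + β + 2 + γ)
     s1 ≠ s2 ∧ s1 ≠ s3 ∧ s2 ≠ s3) ∨
    (let s1 := seqLabel 1 + (seqLabel (2 + α + β + 1) + blockSum 2 (2 + α))
     let s2 := seqLabel 1 + (seqLabel 0 +
       (seqLabel (2 + α) + blockSum (2 + α + 1) (2 + α + 1 + β)))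
     let s3 := seqLabel 0 + blockSum (2 + α + β + 2) (2 + α + β + 2 + γ)
     s1 ≠ s2 ∧ s1 ≠ s3 ∧ s2 ≠ s3) := by
  revert α β γ; decide

/-- Every path hypergraph with exactly three edges, all of size at least 3, is
`Z₂×Z₂`-cordial: three distinct edges, consecutive ones sharing exactly one
vertex, the outer two disjoint, together covering the whole vertex set. -/
theorem path_three_edges_cordial {V : Type*} [DecidableEq V] (Vs : Finset V)
    (e1 e2 e3 : Finset V)
    (hd12 : e1 ≠ e2) (hd23 : e2 ≠ e3) (hd13 : e1 ≠ e3)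
    (h12 : (e1 ∩ e2).card = 1)
    (h23 : (e2 ∩ e3).card = 1)
    (h13 : e1 ∩ e3 = ∅)
    (hcover : e1 ∪ e2 ∪ e3 = Vs)
    (hc1 : 3 ≤ e1.card) (hc2 : 3 ≤ e2.card) (hc3 : 3 ≤ e3.card) :
    Cordial Vs ({e1, e2, e3} : Finset (Finset V)) := by
  obtain ⟨x, hx⟩ := Finset.card_eq_one.mp h12
  obtain ⟨y, hy⟩ := Finset.card_eq_one.mp h23
  have mx : ∀ v, v ∈ e1 ∧ v ∈ e2 ↔ v = x := fun v => by
    rw [← mem_inter, hx, mem_singleton]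
  have my : ∀ v, v ∈ e2 ∧ v ∈ e3 ↔ v = y := fun v => by
    rw [← mem_inter, hy, mem_singleton]
  have m13 : ∀ v, v ∈ e1 → v ∉ e3 := fun v h1 h3 => by
    have : v ∈ e1 ∩ e3 := mem_inter.mpr ⟨h1, h3⟩
    simp [h13] at this
  obtain ⟨hx1, hx2⟩ := (mx x).mpr rfl
  obtain ⟨hy2, hy3⟩ := (my y).mpr rfl
  have hxy : x ≠ y := fun h => m13 x hx1 (h ▸ hy3)
  obtain ⟨a, ha⟩ : (e1.erase x).Nonempty := by
    rw [← Finset.card_pos, card_erase_of_mem hx1]; omega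
  have hy2' : y ∈ e2.erase x := mem_erase.mpr ⟨hxy.symm, hy2⟩
  obtain ⟨b, hb⟩ : ((e2.erase x).erase y).Nonempty := by
    rw [← Finset.card_pos, card_erase_of_mem hy2', card_erase_of_mem hx2]; omega
  set A := (e1.erase x).erase a with hA
  set B := ((e2.erase x).erase y).erase b with hB
  set C := e3.erase y with hC
  have s1 : ∀ c : V → K4, edgeSum c e1 = c x + (c a + (A.toList.map c).sum) := fun c => by
    rw [Finset.sum_map_toList, hA, Finset.add_sum_erase _ _ ha, Finset.add_sum_erase _ _ hx1,
      edgeSum]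
  have s2 : ∀ c : V → K4,
      edgeSum c e2 = c x + (c y + (c b + (B.toList.map c).sum)) := fun c => by
    rw [Finset.sum_map_toList, hB, Finset.add_sum_erase _ _ hb, Finset.add_sum_erase _ _ hy2',
      Finset.add_sum_erase _ _ hx2, edgeSum]
  have s3 : ∀ c : V → K4, edgeSum c e3 = c y + (C.toList.map c).sum := fun c => by
    rw [Finset.sum_map_toList, hC, Finset.add_sum_erase _ _ hy3, edgeSum]
  have nA := A.nodup_toList
  have nB := B.nodup_toList
  have nC := C.nodup_toList
  have mA : ∀ v, v ∈ A.toList ↔ v ≠ a ∧ v ≠ x ∧ v ∈ e1 := by simp [hA]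
  have mB : ∀ v, v ∈ B.toList ↔ v ≠ b ∧ v ≠ y ∧ v ≠ x ∧ v ∈ e2 := by simp [hB]
  have mC : ∀ v, v ∈ C.toList ↔ v ≠ y ∧ v ∈ e3 := by simp [hC]
  simp only [mem_erase] at ha hb
  clear_value A B C
  generalize A.toList = A' at *
  generalize B.toList = B' at *
  generalize C.toList = C' at *
  have single : ∀ {L : List V} (hL : L.Nodup) (l₁ : List V) (v : V) (l₂ : List V),
      L = l₁ ++ (v :: l₂) → cyclicLabel L v = seqLabel l₁.length := by
    intro L hL l₁ v l₂ h
    simpa [blockSum, seqLabel] using sum_block hL l₁ [v] l₂ (by simpa using h)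
  -- A list that enumerates the vertices gives a friendly labeling of `Vs`.
  have friendly : ∀ L : List V, L.Nodup → (∀ v, v ∈ L ↔ v ∈ e1 ∨ v ∈ e2 ∨ v ∈ e3) →
      Friendly Vs (cyclicLabel L) := by
    intro L hL hm
    have : L.toFinset = Vs := by
      ext v; rw [← hcover]; simp [hm]
    rw [← this]
    exact friendly_cyclicLabel L hL
  rcases sums_distinct A'.length B'.length C'.length with h | h
  · obtain ⟨L, hLdef⟩ : ∃ L, L = y :: x :: (A' ++ (B' ++ (a :: b :: C'))) := ⟨_, rfl⟩
    have hL : L.Nodup := by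
      rw [hLdef]
      simp only [List.nodup_cons, List.nodup_append, List.mem_append, List.mem_cons]
      clear friendly single s1 s2 s3 h hcover hA hB hC hx hy h12 h23 h13 hc1 hc2 hc3 hLdef
      clear hd12 hd23 hd13 hy2'
      grind
    have hm : ∀ v, v ∈ L ↔ v ∈ e1 ∨ v ∈ e2 ∨ v ∈ e3 := by
      intro v
      simp only [hLdef, List.mem_append, List.mem_cons]
      grind
    apply cordial_of_distinct Vs e1 e2 e3 (cyclicLabel L) (friendly L hL hm)
    rw [s1, s2, s3, single hL [] y _ hLdef, single hL [y] x _ hLdef,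
      sum_block hL [y, x] A' _ hLdef,
      sum_block hL (y :: x :: A') B' (a :: b :: C') (by simp [hLdef]),
      single hL (y :: x :: (A' ++ B')) a (b :: C') (by simp [hLdef]),
      single hL (y :: x :: (A' ++ B' ++ [a])) b C' (by simp [hLdef]),
      sum_block hL (y :: x :: (A' ++ B' ++ [a, b])) C' [] (by simp [hLdef])]
    convert h using 3 <;> simp <;> ring_nf
  · obtain ⟨L, hLdef⟩ : ∃ L, L = y :: x :: (A' ++ (b :: (B' ++ (a :: C')))) := ⟨_, rfl⟩
    have hL : L.Nodup := by
      rw [hLdef]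
      simp only [List.nodup_cons, List.nodup_append, List.mem_append, List.mem_cons]
      clear friendly single s1 s2 s3 h hcover hA hB hC hx hy h12 h23 h13 hc1 hc2 hc3 hLdef
      clear hd12 hd23 hd13 hy2'
      grind
    have hm : ∀ v, v ∈ L ↔ v ∈ e1 ∨ v ∈ e2 ∨ v ∈ e3 := by
      intro v
      simp only [hLdef, List.mem_append, List.mem_cons]
      grind
    apply cordial_of_distinct Vs e1 e2 e3 (cyclicLabel L) (friendly L hL hm)
    rw [s1, s2, s3, single hL [] y _ hLdef, single hL [y] x _ hLdef,
      sum_block hL [y, x] A' _ hLdef,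
      single hL (y :: x :: A') b (B' ++ (a :: C')) (by simp [hLdef]),
      sum_block hL (y :: x :: (A' ++ [b])) B' (a :: C') (by simp [hLdef]),
      single hL (y :: x :: (A' ++ [b] ++ B')) a C' (by simp [hLdef]),
      sum_block hL (y :: x :: (A' ++ [b] ++ B' ++ [a])) C' [] (by simp [hLdef])]
    convert h using 3 <;> simp <;> ring_nf
end

section
/- For every k with 1 ≤ k ≤ 4 the following holds: given four pairwise disjoint sets e_1, e_2, e_3, e_4 each of size k, there exists a labeling c of the 4k elements of e_1 ∪ e_2 ∪ e_3 ∪ e_4 by elements of Z₂×Z₂ such that every element of Z₂×Z₂ is used exactly k times and the four sums c*(e_i) = Σ_{v∈e_i} c(v) for i = 1,2,3,4 are pairwise distinct (hence run through all four elements of Z₂×Z₂). -/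
/-!
Only the multiset of labels on each `eᵢ` matters: any multiset of size `k` can be realised as the
labels of a `k`-element set (`exists_map_eq`), and labelings of disjoint sets glue. So it suffices
to give, for each `k`, four multisets of size `k` over `Z₂ × Z₂` which together contain every
element exactly `k` times and have distinct sums (`labeling_of_multisets`).

Write the group as the field `F₄` with generator `ω` of the unit group, so that `0, 1, ω, ω²` are
`(0,0), (1,0), (0,1), (1,1)`. For `x` ranging over `F₄`, take
* `k = 1`: `{x}`, with sum `x`;
* `k = 2`: `{x, ωx}`, with sum `(1 + ω)x = ω²x`;
* `k = 3`: the complement of `{x}`, with sum `x` (the sum of all of `F₄` is `0`, and `-x = x`);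
* `k = 4`: the complement of `{x}` together with `ωx`, with sum `ω²x`.
Since multiplication by `ω` and by `ω²` permutes `F₄`, both conditions hold in each case.
-/

open Finset

open Finset

theorem exists_map_eq {V : Type*} [DecidableEq V] (e : Finset V) :
    ∀ M : Multiset K4, e.card = M.card → ∃ c : V → K4, e.val.map c = M := by
  induction e using Finset.induction_on with
  | empty =>
    intro M hM
    exact ⟨0, (Multiset.card_eq_zero.1 hM.symm).symm⟩
  | insert v s hv ih =>
    intro M hM
    rw [Finset.card_insert_of_notMem hv] at hM
    obtain ⟨m, M', rfl⟩ : ∃ m M', M = m ::ₘ M' := by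
      obtain ⟨m, hm⟩ := Multiset.card_pos_iff_exists_mem.1 (by omega : 0 < M.card)
      exact ⟨m, Multiset.exists_cons_of_mem hm⟩
    obtain ⟨c, hc⟩ := ih M' (by simpa using hM)
    refine ⟨Function.update c v m, ?_⟩
    rw [Finset.insert_val_of_notMem hv, Multiset.map_cons, Function.update_self, ← hc]
    congr 1
    refine Multiset.map_congr rfl fun w hw => Function.update_of_ne ?_ _ _
    rintro rfl
    exact hv hw

theorem card_filter_eq_count {V : Type*} (e : Finset V) (c : V → K4) (a : K4) :
    (e.filter fun v => c v = a).card = (e.val.map c).count a := by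
  rw [Multiset.count_map, Finset.card_def, Finset.filter_val]
  simp only [eq_comm]

/-- Reduction of the labeling problem to the choice of four multisets of labels: `M.sum` is the
induced label of an edge whose vertices carry the labels `M`. -/
theorem labeling_of_multisets {V : Type*} [DecidableEq V] (k : ℕ) (e1 e2 e3 e4 : Finset V)
    (hc1 : e1.card = k) (hc2 : e2.card = k) (hc3 : e3.card = k) (hc4 : e4.card = k)
    (h12 : Disjoint e1 e2) (h13 : Disjoint e1 e3) (h14 : Disjoint e1 e4)
    (h23 : Disjoint e2 e3) (h24 : Disjoint e2 e4) (h34 : Disjoint e3 e4)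
    (M1 M2 M3 M4 : Multiset K4)
    (hM : M1.card = k ∧ M2.card = k ∧ M3.card = k ∧ M4.card = k)
    (hcount : ∀ a : K4, (M1 + M2 + M3 + M4).count a = k)
    (hsum : [M1.sum, M2.sum, M3.sum, M4.sum].Nodup) :
    ∃ c : V → K4,
      (∀ a : K4, (((e1 ∪ e2 ∪ e3 ∪ e4).filter fun v => c v = a).card = k)) ∧
      edgeSum c e1 ≠ edgeSum c e2 ∧ edgeSum c e1 ≠ edgeSum c e3 ∧
      edgeSum c e1 ≠ edgeSum c e4 ∧ edgeSum c e2 ≠ edgeSum c e3 ∧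
      edgeSum c e2 ≠ edgeSum c e4 ∧ edgeSum c e3 ≠ edgeSum c e4 := by
  obtain ⟨hM1, hM2, hM3, hM4⟩ := hM
  obtain ⟨c1, rfl⟩ := exists_map_eq e1 M1 (by omega)
  obtain ⟨c2, rfl⟩ := exists_map_eq e2 M2 (by omega)
  obtain ⟨c3, rfl⟩ := exists_map_eq e3 M3 (by omega)
  obtain ⟨c4, rfl⟩ := exists_map_eq e4 M4 (by omega)
  obtain ⟨c, H1, H2, H3, H4⟩ : ∃ c : V → K4,
      e1.val.map c = e1.val.map c1 ∧ e2.val.map c = e2.val.map c2 ∧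
      e3.val.map c = e3.val.map c3 ∧ e4.val.map c = e4.val.map c4 := by
    refine ⟨fun v => if v ∈ e1 then c1 v else if v ∈ e2 then c2 v else
      if v ∈ e3 then c3 v else c4 v, ?_, ?_, ?_, ?_⟩ <;>
    · refine Multiset.map_congr rfl fun v hv => ?_
      rw [Finset.mem_val] at hv
      have := @Finset.disjoint_left V
      grind
  refine ⟨c, fun a => ?_, ?_⟩
  · have d3 : Disjoint (e1 ∪ e2) e3 := Finset.disjoint_union_left.2 ⟨h13, h23⟩
    have d4 : Disjoint (e1 ∪ e2 ∪ e3) e4 :=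
      Finset.disjoint_union_left.2 ⟨Finset.disjoint_union_left.2 ⟨h14, h24⟩, h34⟩
    rw [← hcount a, Finset.filter_union, Finset.filter_union, Finset.filter_union,
      Finset.card_union_of_disjoint, Finset.card_union_of_disjoint,
      Finset.card_union_of_disjoint (Finset.disjoint_filter_filter h12)]
    · simp only [card_filter_eq_count, Multiset.count_add, H1, H2, H3, H4]
    · rw [← Finset.filter_union]
      exact Finset.disjoint_filter_filter d3
    · rw [← Finset.filter_union, ← Finset.filter_union]
      exact Finset.disjoint_filter_filter d4
  · rw [← H1, ← H2, ← H3, ← H4] at hsum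
    have hs : ∀ e : Finset V, (e.val.map c).sum = edgeSum c e := fun _ => rfl
    simp only [hs] at hsum
    grind

/-- For every `k` with `1 ≤ k ≤ 4`: given four pairwise disjoint finite sets
`e₁, e₂, e₃, e₄`, each of size `k`, there is a labeling of their union by
elements of `Z₂×Z₂` using every element exactly `k` times, such that the four
induced sums `Σ_{v ∈ eᵢ} c v` are pairwise distinct. -/
theorem four_disjoint_sets_labeling {V : Type*} [DecidableEq V] (k : ℕ)
    (hk1 : 1 ≤ k) (hk4 : k ≤ 4)
    (e1 e2 e3 e4 : Finset V)
    (hc1 : e1.card = k) (hc2 : e2.card = k) (hc3 : e3.card = k) (hc4 : e4.card = k)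
    (h12 : Disjoint e1 e2) (h13 : Disjoint e1 e3) (h14 : Disjoint e1 e4)
    (h23 : Disjoint e2 e3) (h24 : Disjoint e2 e4) (h34 : Disjoint e3 e4) :
    ∃ c : V → K4,
      (∀ a : K4, (((e1 ∪ e2 ∪ e3 ∪ e4).filter fun v => c v = a).card = k)) ∧
      edgeSum c e1 ≠ edgeSum c e2 ∧ edgeSum c e1 ≠ edgeSum c e3 ∧
      edgeSum c e1 ≠ edgeSum c e4 ∧ edgeSum c e2 ≠ edgeSum c e3 ∧
      edgeSum c e2 ≠ edgeSum c e4 ∧ edgeSum c e3 ≠ edgeSum c e4 := by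
  have key := labeling_of_multisets k e1 e2 e3 e4 hc1 hc2 hc3 hc4 h12 h13 h14 h23 h24 h34
  clear hc1 hc2 hc3 hc4
  interval_cases k
  · exact key {(0, 0)} {(1, 0)} {(0, 1)} {(1, 1)} (by decide) (by decide) (by decide)
  · exact key {(0, 0), (0, 0)} {(1, 0), (0, 1)} {(0, 1), (1, 1)} {(1, 1), (1, 0)}
      (by decide) (by decide) (by decide)
  · exact key {(1, 0), (0, 1), (1, 1)} {(0, 0), (0, 1), (1, 1)}
      {(0, 0), (1, 0), (1, 1)} {(0, 0), (1, 0), (0, 1)} (by decide) (by decide) (by decide)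
  · exact key {(1, 0), (0, 1), (1, 1), (0, 0)} {(0, 0), (0, 1), (1, 1), (0, 1)}
      {(0, 0), (1, 0), (1, 1), (1, 1)} {(0, 0), (1, 0), (0, 1), (1, 0)}
      (by decide) (by decide) (by decide)
end
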